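/- arXiv:math/0210332 — 2 statements merged into one kernel-verified Lean document; each statement's English description precedes it below -/
import Mathlib

section
/- Let a ∈ [0,1) and s* = 1/2 + a/2. For every b ∈ ℝ there is NO constant C > 0 such that the estimate ‖∂ₓ(u₁u₂)‖_{X^{−b}_{s*}} ≤ C ‖u₁‖_{X^b_{s*}} ‖u₂‖_{X^b_{s*}} holds for all Schwartz functions u₁, u₂ on ℝ². -/
/-!
The estimate fails because of the interaction of a very low frequency with a high frequency `N`.

For `|ξ₁| ≲ N^(-1-a)` the resonance function `ω(ξ₁ + ξ₂) - ω(ξ₁) - ω(ξ₂)` with `ξ₂ ≈ N` is of size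
`|ξ₁| N^(1+a) ≲ 1`, so modulation gains nothing. With `δ = N^(-1-a) / 24`, take for `u₁` and `u₂`
wave packets whose Fourier transforms are bumps on rectangles of size `δ × 1` centred at `(0, 0)`
and at `(N, ω(N))`. On these rectangles, and on the one carrying the Fourier transform of the
product, `ω` varies so little (`disp_sub_le`) that `|λ - ω(ξ)| ≤ 1`. There `χ₀ = 1` and all other
cutoffs vanish, so every norm reduces to a weighted `L²` norm and `b` disappears
(`Xnorm_eq_of_modulation`). Writing `s` for the Sobolev exponent and counting powers,
`‖u₁‖ ≲ δ^(1/2)` and `‖u₂‖ ≲ N^s δ^(1/2)` (`Xnorm_packet`), whereas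
`‖∂ₓ(u₁u₂)‖ ≳ N · N^s δ^(3/2)` (`le_Xnorm_deriv`). The estimate would thus force
`N δ^(1/2) ∼ N^((1-a)/2)` to stay bounded, which is false since `a < 1`.

The packets are tensor products of functions of `x` and of `t` (`schwartzTensor`, `packet`), which
reduces all Fourier transforms to dimension one. The transform of a product of two packets is
a rescaled copy of the fixed function `profileConv`, by the convolution theorem (`FT1_packetProd`).
-/

open MeasureTheory Complex

noncomputable section

/-- The dispersive symbol `ω(ξ) = ξ |ξ|^(1+a)`. -/
def disp (a ξ : ℝ) : ℝ := ξ * |ξ| ^ (1 + a)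

/-- Fourier transform on `ℝ`, convention `f̂(ξ) = ∫ e^{ixξ} f(x) dx`. -/
def FT1 (f : ℝ → ℂ) (ξ : ℝ) : ℂ :=
  ∫ x : ℝ, Complex.exp (Complex.I * ((x * ξ : ℝ) : ℂ)) * f x

/-- Spacetime Fourier transform, convention `f̂(ξ,λ) = ∫ e^{i(xξ+tλ)} f(x,t) dx dt`,
for `f : ℝ × ℝ → ℂ` with first coordinate `x` (space) and second `t` (time). -/
def FT2 (f : ℝ × ℝ → ℂ) (ξ lam : ℝ) : ℂ :=
  ∫ p : ℝ × ℝ, Complex.exp (Complex.I * ((p.1 * ξ + p.2 * lam : ℝ) : ℂ)) * f p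

/-- The dyadic cutoffs `χ_j`: `χ_0 = χ₀` and `χ_j(z) = χ(2^{-j} z)` for `j ≥ 1`. -/
def chiJ (χ₀ χ : ℝ → ℝ) (j : ℕ) (z : ℝ) : ℝ :=
  if j = 0 then χ₀ z else χ ((2 : ℝ) ^ (-(j : ℝ)) * z)

/-- Hypotheses on the fixed dyadic cutoffs. -/
structure DyadicCutoffs (χ₀ χ : ℝ → ℝ) : Prop where
  smooth0 : ContDiff ℝ (⊤ : ℕ∞) χ₀
  even0 : ∀ z, χ₀ (-z) = χ₀ z
  mem0 : ∀ z, χ₀ z ∈ Set.Icc (0 : ℝ) 1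
  supp0 : ∀ z, 2 < |z| → χ₀ z = 0
  one0 : ∀ z, |z| ≤ 1 → χ₀ z = 1
  smooth1 : ContDiff ℝ (⊤ : ℕ∞) χ
  even1 : ∀ z, χ (-z) = χ z
  mem1 : ∀ z, χ z ∈ Set.Icc (0 : ℝ) 1
  supp1 : ∀ z, χ z ≠ 0 → 1 / 2 < |z| ∧ |z| < 2
  partition : ∀ z, ∑' j : ℕ, chiJ χ₀ χ j z = 1

/-- A smooth time cutoff supported in `[-1,1]`. -/
structure TimeCutoff (ψ : ℝ → ℝ) : Prop where
  smooth : ContDiff ℝ (⊤ : ℕ∞) ψ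
  supp : ∀ t, ψ t ≠ 0 → |t| ≤ 1

/-- The norm `‖f‖_{X^b_s}`. -/
def Xnorm (a : ℝ) (χ₀ χ : ℝ → ℝ) (b s : ℝ) (f : ℝ × ℝ → ℂ) : ℝ :=
  ∑' j : ℕ, (2 : ℝ) ^ ((j : ℝ) * b) *
    (∫ p : ℝ × ℝ, chiJ χ₀ χ j (p.2 - disp a p.1) * (1 + |p.1|) ^ (2 * s) *
      ‖FT2 f p.1 p.2‖ ^ 2) ^ ((1 : ℝ) / 2)

/-- The norm `‖f‖_{Y^b_{s₀,s₁}} = ‖x·f‖_{X^b_{s₀}} + ‖t·f‖_{X^b_{s₁}}`. -/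
def Ynorm (a : ℝ) (χ₀ χ : ℝ → ℝ) (b s₀ s₁ : ℝ) (f : ℝ × ℝ → ℂ) : ℝ :=
  Xnorm a χ₀ χ b s₀ (fun p => (p.1 : ℂ) * f p) +
    Xnorm a χ₀ χ b s₁ (fun p => (p.2 : ℂ) * f p)

/-- The norm `‖f‖_{Z^b_s} = ‖f‖_{X^b_s} + ‖f‖_{Y^b_{s-2s*,s}}`, where `s* = 1/2 + a/2`. -/
def Znorm (a : ℝ) (χ₀ χ : ℝ → ℝ) (b s : ℝ) (f : ℝ × ℝ → ℂ) : ℝ :=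
  Xnorm a χ₀ χ b s f + Ynorm a χ₀ χ b (s - 2 * (1 / 2 + a / 2)) s f

/-- The norm `‖f‖_{X̃^b_s}`. -/
def XtildeNorm (a b s : ℝ) (f : ℝ × ℝ → ℂ) : ℝ :=
  (∫ p : ℝ × ℝ, (1 + |p.2 - disp a p.1|) ^ (2 * b) * (1 + |p.1|) ^ (2 * s) *
    ‖FT2 f p.1 p.2‖ ^ 2) ^ ((1 : ℝ) / 2)

/-- The Sobolev norm `‖g‖_{H^s} = (∫ (1+|ξ|)^{2s} |ĝ(ξ)|² dξ)^{1/2}`. -/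
def Hnorm (s : ℝ) (g : ℝ → ℂ) : ℝ :=
  (∫ ξ : ℝ, (1 + |ξ|) ^ (2 * s) * ‖FT1 g ξ‖ ^ 2) ^ ((1 : ℝ) / 2)

/-- The weighted norm `‖g‖_{F^s} = ‖g‖_{H^s} + ‖x·g‖_{H^{s-2s*}}` (here `sstar = s*`). -/
def Fnorm (sstar s : ℝ) (g : ℝ → ℂ) : ℝ :=
  Hnorm s g + Hnorm (s - 2 * sstar) (fun x => (x : ℂ) * g x)

/-- The `L^p` norm `(∫ ‖f‖^p)^{1/p}`. -/
def Lpnorm {α : Type*} [MeasureSpace α] {E : Type*} [NormedAddCommGroup E]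
    (p : ℝ) (f : α → E) : ℝ :=
  (∫ x, ‖f x‖ ^ p) ^ (1 / p)

/-- The linear propagator `W(t)`, defined via Fourier inversion so that its Fourier
transform in `x` is `e^{itω(ξ)} û₀(ξ)`. -/
def Wgrp (a : ℝ) (u₀ : ℝ → ℂ) (t x : ℝ) : ℂ :=
  ((1 / (2 * Real.pi) : ℝ) : ℂ) *
    ∫ ξ : ℝ, Complex.exp (-(Complex.I * ((x * ξ : ℝ) : ℂ))) *
      (Complex.exp (Complex.I * ((t * disp a ξ : ℝ) : ℂ)) * FT1 u₀ ξ)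

/-- The Fourier multiplier `D^σ` with symbol `|ξ|^σ`, via Fourier inversion. -/
def Dop (σ : ℝ) (g : ℝ → ℂ) (x : ℝ) : ℂ :=
  ((1 / (2 * Real.pi) : ℝ) : ℂ) *
    ∫ ξ : ℝ, Complex.exp (-(Complex.I * ((x * ξ : ℝ) : ℂ))) *
      (((|ξ| ^ σ : ℝ) : ℂ) * FT1 g ξ)

open scoped SchwartzMap FourierTransform ContDiff Convolution

/-! ### Tensor products and Fourier transforms of Schwartz functions -/

/-- The Schwartz function `(x, t) ↦ f x * g t` on the plane. -/
def schwartzTensor (f g : 𝓢(ℝ, ℂ)) : 𝓢(ℝ × ℝ, ℂ) where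
  toFun p := f p.1 * g p.2
  smooth' := ((f.smooth ⊤).comp contDiff_fst).mul ((g.smooth ⊤).comp contDiff_snd)
  decay' k n := by
    have hfst : ∀ (i : ℕ) (p : ℝ × ℝ),
        ‖iteratedFDeriv ℝ i (fun q : ℝ × ℝ => f q.1) p‖ ≤ ‖iteratedFDeriv ℝ i f p.1‖ := by
      intro i p
      have h := (ContinuousLinearMap.fst ℝ ℝ ℝ).iteratedFDeriv_comp_right (f.smooth ⊤) p
        (i := i) (by exact_mod_cast le_top)
      change ‖iteratedFDeriv ℝ i (f ∘ (ContinuousLinearMap.fst ℝ ℝ ℝ)) p‖ ≤ _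
      rw [h]
      refine (ContinuousMultilinearMap.norm_compContinuousLinearMap_le _ _).trans ?_
      refine mul_le_of_le_one_right (norm_nonneg _) ?_
      exact Finset.prod_le_one (fun _ _ => norm_nonneg _)
        (fun _ _ => ContinuousLinearMap.norm_fst_le ℝ ℝ ℝ)
    have hsnd : ∀ (i : ℕ) (p : ℝ × ℝ),
        ‖iteratedFDeriv ℝ i (fun q : ℝ × ℝ => g q.2) p‖ ≤ ‖iteratedFDeriv ℝ i g p.2‖ := by
      intro i p
      have h := (ContinuousLinearMap.snd ℝ ℝ ℝ).iteratedFDeriv_comp_right (g.smooth ⊤) p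
        (i := i) (by exact_mod_cast le_top)
      change ‖iteratedFDeriv ℝ i (g ∘ (ContinuousLinearMap.snd ℝ ℝ ℝ)) p‖ ≤ _
      rw [h]
      refine (ContinuousMultilinearMap.norm_compContinuousLinearMap_le _ _).trans ?_
      refine mul_le_of_le_one_right (norm_nonneg _) ?_
      exact Finset.prod_le_one (fun _ _ => norm_nonneg _)
        (fun _ _ => ContinuousLinearMap.norm_snd_le ℝ ℝ ℝ)
    refine ⟨∑ i ∈ Finset.range (n + 1), (n.choose i : ℝ) *
      (SchwartzMap.seminorm ℝ k i f * SchwartzMap.seminorm ℝ 0 (n - i) g +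
        SchwartzMap.seminorm ℝ 0 i f * SchwartzMap.seminorm ℝ k (n - i) g), fun p => ?_⟩
    have hmul := norm_iteratedFDeriv_mul_le (𝕜 := ℝ) (n := n) (N := ∞)
      ((f.smooth ⊤).comp contDiff_fst) ((g.smooth ⊤).comp contDiff_snd) p
      (by exact_mod_cast le_top)
    refine (mul_le_mul_of_nonneg_left hmul (by positivity)).trans ?_
    rw [Finset.mul_sum]
    refine Finset.sum_le_sum fun i _ => ?_
    have hp : ‖p‖ ^ k ≤ ‖p.1‖ ^ k + ‖p.2‖ ^ k := by
      rw [Prod.norm_def]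
      rcases max_cases ‖p.1‖ ‖p.2‖ with h | h <;> rw [h.1]
      · exact le_add_of_nonneg_right (by positivity)
      · exact le_add_of_nonneg_left (by positivity)
    set A := ‖iteratedFDeriv ℝ i f p.1‖ with hA
    set B := ‖iteratedFDeriv ℝ (n - i) g p.2‖ with hB
    have hA0 : 0 ≤ A := norm_nonneg _
    have hB0 : 0 ≤ B := norm_nonneg _
    have e1 := f.le_seminorm ℝ k i p.1
    have e2 := f.le_seminorm ℝ 0 i p.1
    have e3 := g.le_seminorm ℝ k (n - i) p.2
    have e4 := g.le_seminorm ℝ 0 (n - i) p.2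
    rw [pow_zero, one_mul] at e2 e4
    calc _ ≤ (‖p.1‖ ^ k + ‖p.2‖ ^ k) * ((n.choose i : ℝ) * A * B) := by
          refine mul_le_mul hp ?_ (by positivity) (by positivity)
          exact mul_le_mul (mul_le_mul_of_nonneg_left (hfst i p) (by positivity))
            (hsnd (n - i) p) (norm_nonneg _) (by positivity)
      _ = (n.choose i : ℝ) * ((‖p.1‖ ^ k * A) * B + A * (‖p.2‖ ^ k * B)) := by ring
      _ ≤ _ := by
          gcongr

lemma schwartzTensor_apply (f g : 𝓢(ℝ, ℂ)) (x t : ℝ) :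
    schwartzTensor f g (x, t) = f x * g t := rfl

lemma FT2_tensor (f g : ℝ → ℂ) (ξ lam : ℝ) :
    FT2 (fun p => f p.1 * g p.2) ξ lam = FT1 f ξ * FT1 g lam := by
  unfold FT2 FT1
  rw [← integral_prod_mul]
  refine integral_congr_ae (Filter.Eventually.of_forall fun p => ?_)
  simp only
  rw [show (Complex.I * ((p.1 * ξ + p.2 * lam : ℝ) : ℂ)) =
    Complex.I * ((p.1 * ξ : ℝ) : ℂ) + Complex.I * ((p.2 * lam : ℝ) : ℂ) by push_cast; ring,
    Complex.exp_add]
  ring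

/-- `FT1` is Mathlib's inverse Fourier transform, up to rescaling the frequency by `2π`. -/
lemma FT1_eq_fourierInv (f : ℝ → ℂ) (ξ : ℝ) : FT1 f ξ = 𝓕⁻ f (ξ / (2 * Real.pi)) := by
  rw [Real.fourierInv_eq']
  unfold FT1
  refine integral_congr_ae (Filter.Eventually.of_forall fun x => ?_)
  simp only [smul_eq_mul]
  congr 2
  have : (Real.pi : ℂ) ≠ 0 := by exact_mod_cast Real.pi_ne_zero
  simp
  field_simp

lemma FT1_fourier (f : 𝓢(ℝ, ℂ)) (ξ : ℝ) :
    FT1 (𝓕 f : 𝓢(ℝ, ℂ)) ξ = f (ξ / (2 * Real.pi)) := by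
  rw [FT1_eq_fourierInv, ← SchwartzMap.fourierInv_coe, FourierTransform.fourierInv_fourier_eq]

lemma FT1_deriv (f : 𝓢(ℝ, ℂ)) (ξ : ℝ) :
    FT1 (deriv f) ξ = -(Complex.I * ξ) * FT1 f ξ := by
  have key := Real.fourier_deriv f.integrable f.differentiable
    (SchwartzMap.derivCLM ℝ ℂ f).integrable
  have h := congrFun key (-(ξ / (2 * Real.pi)))
  rw [← Real.fourierInv_eq_fourier_neg] at h
  rw [FT1_eq_fourierInv, FT1_eq_fourierInv, h, Real.fourierInv_eq_fourier_neg]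
  have : (Real.pi : ℂ) ≠ 0 := by exact_mod_cast Real.pi_ne_zero
  simp only [smul_eq_mul]
  push_cast
  field_simp

/-! ### Wave packets -/

/-- The bump function fixing the frequency profile, supported in `[-1/4, 1/4]`. -/
def profileBump : ContDiffBump (0 : ℝ) := ⟨1 / 8, 1 / 4, by norm_num, by norm_num⟩

/-- The frequency profile, as a complex-valued function. -/
def profile (x : ℝ) : ℂ := (profileBump x : ℂ)

/-- The self-convolution of the profile. -/
def profileConv (x : ℝ) : ℂ := ∫ y, profile y * profile (x - y)

lemma profile_contDiff : ContDiff ℝ ∞ profile :=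
  Complex.ofRealCLM.contDiff.comp profileBump.contDiff

lemma profile_eq_zero {x : ℝ} (hx : 1 / 4 ≤ |x|) : profile x = 0 := by
  unfold profile
  rw [profileBump.zero_of_le_dist (by simpa [profileBump] using hx), Complex.ofReal_zero]

lemma profile_compact : HasCompactSupport profile := by
  refine HasCompactSupport.of_support_subset_isCompact
    (isCompact_Icc (a := -(1 / 4 : ℝ)) (b := 1 / 4)) fun x hx => ?_
  by_contra h
  refine hx (profile_eq_zero ?_)
  by_contra h2
  exact h ⟨(abs_lt.1 (not_le.1 h2)).1.le, (abs_lt.1 (not_le.1 h2)).2.le⟩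

lemma profileConv_eq : profileConv = profile ⋆[ContinuousLinearMap.mul ℝ ℂ] profile := by
  ext x
  simp [profileConv, convolution_def]

lemma profileConv_continuous : Continuous profileConv := by
  rw [profileConv_eq]
  exact profile_compact.continuous_convolution_right _
    (profile_contDiff.continuous.locallyIntegrable) profile_contDiff.continuous

lemma profileConv_eq_zero {x : ℝ} (hx : 1 / 2 < |x|) : profileConv x = 0 := by
  unfold profileConv
  rw [← integral_zero ℝ ℂ]
  refine integral_congr_ae (Filter.Eventually.of_forall fun y => ?_)
  by_cases hy : 1 / 4 ≤ |y|
  · simp [profile_eq_zero hy]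
  · have : 1 / 4 ≤ |x - y| := by
      have := abs_sub_abs_le_abs_sub x y
      linarith [not_le.1 hy]
    simp [profile_eq_zero this]

lemma profileConv_zero_ne : profileConv 0 ≠ 0 := by
  have h : profileConv 0 = ((∫ y, profileBump y * profileBump y : ℝ) : ℂ) := by
    unfold profileConv
    rw [← integral_complex_ofReal]
    refine integral_congr_ae (Filter.Eventually.of_forall fun y => ?_)
    simp [profile, profileBump.neg]
  rw [h, Complex.ofReal_ne_zero]
  refine ne_of_gt (Continuous.integral_pos_of_hasCompactSupport_nonneg_nonzero (x := 0)
    (profileBump.continuous.mul profileBump.continuous) profileBump.hasCompactSupport.mul_left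
    (fun y => mul_self_nonneg _) ?_)
  rw [profileBump.one_of_mem_closedBall (by simp [profileBump])]
  norm_num

/-- A bump in frequency of width `δ` around `c`, in the frequency variable of Mathlib's
Fourier transform, which is `1 / (2π)` times that of `FT1`. -/
def freqBump (c δ : ℝ) (hδ : 0 < δ) : 𝓢(ℝ, ℂ) :=
  HasCompactSupport.toSchwartzMap (f := fun η : ℝ => profile ((2 * Real.pi * η - c) / δ))
    (by
      have hpi := Real.pi_pos
      refine HasCompactSupport.of_support_subset_isCompact
        (isCompact_Icc (a := (c - δ) / (2 * Real.pi)) (b := (c + δ) / (2 * Real.pi)))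
        fun η hη => ?_
      have h : |(2 * Real.pi * η - c) / δ| < 1 / 4 := by
        by_contra h
        exact hη (profile_eq_zero (not_lt.1 h))
      rw [abs_div, abs_of_pos hδ, div_lt_iff₀ hδ, abs_lt] at h
      constructor
      · rw [div_le_iff₀ (by positivity)]; linarith
      · rw [le_div_iff₀ (by positivity)]; linarith)
    (by
      refine profile_contDiff.comp ?_
      fun_prop)

lemma freqBump_apply (c δ : ℝ) (hδ : 0 < δ) (η : ℝ) :
    freqBump c δ hδ η = profile ((2 * Real.pi * η - c) / δ) := rfl

/-- The Schwartz function whose transform `FT1` is the profile rescaled to width `δ` and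
centred at frequency `c`. -/
def packet (c δ : ℝ) (hδ : 0 < δ) : 𝓢(ℝ, ℂ) := 𝓕 (freqBump c δ hδ)

lemma FT1_packet (c δ : ℝ) (hδ : 0 < δ) (ξ : ℝ) :
    FT1 (packet c δ hδ) ξ = profile ((ξ - c) / δ) := by
  unfold packet
  rw [FT1_fourier, freqBump_apply]
  congr 3
  have := Real.pi_ne_zero
  field_simp

/-- The product of the packets at frequencies `0` and `c`, of equal width (`packetProd_apply`),
defined on the Fourier side as a convolution. -/
def packetProd (c δ : ℝ) (hδ : 0 < δ) : 𝓢(ℝ, ℂ) :=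
  𝓕 (SchwartzMap.convolution (ContinuousLinearMap.mul ℂ ℂ) (freqBump 0 δ hδ) (freqBump c δ hδ))

lemma packetProd_apply (c δ : ℝ) (hδ : 0 < δ) (x : ℝ) :
    packetProd c δ hδ x = packet 0 δ hδ x * packet c δ hδ x := by
  unfold packetProd packet
  rw [SchwartzMap.fourier_convolution]
  rfl

lemma FT1_packetProd (c δ : ℝ) (hδ : 0 < δ) (ξ : ℝ) :
    FT1 (packetProd c δ hδ) ξ = ((δ / (2 * Real.pi) : ℝ) : ℂ) * profileConv ((ξ - c) / δ) := by
  have hpi := Real.pi_pos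
  unfold packetProd
  rw [FT1_fourier, SchwartzMap.convolution_apply]
  simp only [convolution_def, ContinuousLinearMap.mul_apply', freqBump_apply]
  have h := Measure.integral_comp_mul_left
    (fun y => profile y * profile ((ξ - c) / δ - y)) (2 * Real.pi / δ)
  rw [abs_of_pos (by positivity)] at h
  unfold profileConv
  rw [inv_div, Complex.real_smul] at h
  rw [← h]
  refine integral_congr_ae (Filter.Eventually.of_forall fun y => ?_)
  simp only
  congr 2
  · field_simp; ring
  · field_simp; ring

/-! ### Norms of functions with bounded modulation -/

/-- If the space-time Fourier transform of `u` is a product supported where the modulation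
`|λ - ω(ξ)|` is at most one, then only the term `j = 0` contributes to the norm of `u`, and the
exponent `b` plays no role. -/
lemma Xnorm_eq_of_modulation {a : ℝ} {χ₀ χ : ℝ → ℝ} (hχ : DyadicCutoffs χ₀ χ) (b s : ℝ)
    (u : ℝ × ℝ → ℂ) (A B : ℝ → ℂ) (hu : ∀ ξ lam, FT2 u ξ lam = A ξ * B lam)
    (hsupp : ∀ ξ lam, A ξ ≠ 0 → B lam ≠ 0 → |lam - disp a ξ| ≤ 1) :
    Xnorm a χ₀ χ b s u =
      ((∫ ξ, (1 + |ξ|) ^ (2 * s) * ‖A ξ‖ ^ 2) * ∫ lam, ‖B lam‖ ^ 2) ^ ((1 : ℝ) / 2) := by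
  unfold Xnorm
  rw [tsum_eq_single 0]
  · rw [← integral_prod_mul]
    simp only [Nat.cast_zero, zero_mul, Real.rpow_zero, one_mul]
    congr 1
    refine integral_congr_ae (Filter.Eventually.of_forall fun p => ?_)
    simp only [hu, norm_mul, mul_pow]
    by_cases hA : A p.1 = 0
    · simp [hA]
    by_cases hB : B p.2 = 0
    · simp [hB]
    rw [show chiJ χ₀ χ 0 (p.2 - disp a p.1) = 1 from hχ.one0 _ (hsupp _ _ hA hB)]
    ring
  · intro j hj
    have h0 : ∀ p : ℝ × ℝ, chiJ χ₀ χ j (p.2 - disp a p.1) * (1 + |p.1|) ^ (2 * s) *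
        ‖FT2 u p.1 p.2‖ ^ 2 = 0 := by
      intro p
      rw [hu]
      by_cases hA : A p.1 = 0
      · simp [hA]
      by_cases hB : B p.2 = 0
      · simp [hB]
      have hm := hsupp _ _ hA hB
      have : chiJ χ₀ χ j (p.2 - disp a p.1) = 0 := by
        unfold chiJ
        rw [if_neg hj]
        by_contra hne
        have h1 := (hχ.supp1 _ hne).1
        rw [abs_mul, abs_of_pos (by positivity)] at h1
        have h2 : (2 : ℝ) ^ (-(j : ℝ)) ≤ 1 / 2 := by
          have : (2 : ℝ) ^ (-(j : ℝ)) ≤ (2 : ℝ) ^ (-1 : ℝ) := by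
            refine Real.rpow_le_rpow_of_exponent_le (by norm_num) ?_
            have : (1 : ℝ) ≤ j := by exact_mod_cast Nat.one_le_iff_ne_zero.2 hj
            linarith
          rw [Real.rpow_neg_one] at this
          linarith
        have h3 : (2 : ℝ) ^ (-(j : ℝ)) * |p.2 - disp a p.1| ≤ 1 / 2 * 1 :=
          mul_le_mul h2 hm (abs_nonneg _) (by norm_num)
        linarith
      rw [this]
      ring
    simp only [h0]
    simp

lemma integral_rescale (F : ℝ → ℝ) (c δ : ℝ) (hδ : 0 < δ) :
    ∫ ξ, F ((ξ - c) / δ) = δ * ∫ ξ, F ξ := by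
  rw [integral_sub_right_eq_self (fun ξ => F (ξ / δ)) c, Measure.integral_comp_div,
    abs_of_pos hδ, smul_eq_mul]

lemma hasCompactSupport_of_half {ψ : ℝ → ℂ} (h0 : ∀ x, 1 / 2 < |x| → ψ x = 0) :
    HasCompactSupport ψ := by
  refine HasCompactSupport.of_support_subset_isCompact
    (isCompact_Icc (a := -(1 / 2 : ℝ)) (b := 1 / 2)) fun x hx => ?_
  exact abs_le.1 (not_lt.1 fun h => hx (h0 x h))

lemma integrable_rescale {ψ : ℝ → ℂ} (hψ : Continuous ψ) (h0 : ∀ x, 1 / 2 < |x| → ψ x = 0)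
    (c δ : ℝ) (hδ : 0 < δ) {W : ℝ → ℝ} (hW : Continuous W) :
    Integrable (fun ξ => W ξ * ‖ψ ((ξ - c) / δ)‖ ^ 2) := by
  refine Continuous.integrable_of_hasCompactSupport (by fun_prop) ?_
  refine HasCompactSupport.of_support_subset_isCompact
    (isCompact_Icc (a := c - δ) (b := c + δ)) fun x hx => ?_
  have hx' : ¬ 1 / 2 < |(x - c) / δ| := fun h => hx (by simp [h0 _ h])
  rw [not_lt, abs_div, abs_of_pos hδ, div_le_iff₀ hδ, abs_le] at hx'
  constructor <;> linarith

lemma abs_sub_le_of_ne_zero {ψ : ℝ → ℂ} (h0 : ∀ x, 1 / 2 < |x| → ψ x = 0) {c δ : ℝ}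
    (hδ : 0 < δ) {ξ : ℝ} (h : ψ ((ξ - c) / δ) ≠ 0) : |ξ - c| ≤ δ / 2 := by
  have := not_lt.1 fun h' => h (h0 _ h')
  rw [abs_div, abs_of_pos hδ, div_le_iff₀ hδ] at this
  linarith

lemma weighted_le {ψ : ℝ → ℂ} (hψ : Continuous ψ) (h0 : ∀ x, 1 / 2 < |x| → ψ x = 0)
    (c δ : ℝ) (hδ : 0 < δ) {W : ℝ → ℝ} (hW : Continuous W) (m : ℝ)
    (h : ∀ ξ, |ξ - c| ≤ δ / 2 → W ξ ≤ m) :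
    ∫ ξ, W ξ * ‖ψ ((ξ - c) / δ)‖ ^ 2 ≤ m * (δ * ∫ ξ, ‖ψ ξ‖ ^ 2) := by
  rw [← integral_rescale (fun ξ => ‖ψ ξ‖ ^ 2) c δ hδ, ← integral_const_mul]
  refine integral_mono (integrable_rescale hψ h0 c δ hδ hW)
    (integrable_rescale hψ h0 c δ hδ continuous_const) fun ξ => ?_
  by_cases hz : ψ ((ξ - c) / δ) = 0
  · simp [hz]
  · exact mul_le_mul_of_nonneg_right (h _ (abs_sub_le_of_ne_zero h0 hδ hz)) (by positivity)

lemma le_weighted {ψ : ℝ → ℂ} (hψ : Continuous ψ) (h0 : ∀ x, 1 / 2 < |x| → ψ x = 0)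
    (c δ : ℝ) (hδ : 0 < δ) {W : ℝ → ℝ} (hW : Continuous W) (m : ℝ)
    (h : ∀ ξ, |ξ - c| ≤ δ / 2 → m ≤ W ξ) :
    m * (δ * ∫ ξ, ‖ψ ξ‖ ^ 2) ≤ ∫ ξ, W ξ * ‖ψ ((ξ - c) / δ)‖ ^ 2 := by
  rw [← integral_rescale (fun ξ => ‖ψ ξ‖ ^ 2) c δ hδ, ← integral_const_mul]
  refine integral_mono (integrable_rescale hψ h0 c δ hδ continuous_const)
    (integrable_rescale hψ h0 c δ hδ hW) fun ξ => ?_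
  by_cases hz : ψ ((ξ - c) / δ) = 0
  · simp [hz]
  · exact mul_le_mul_of_nonneg_right (h _ (abs_sub_le_of_ne_zero h0 hδ hz)) (by positivity)

lemma profile_half {x : ℝ} (hx : 1 / 2 < |x|) : profile x = 0 :=
  profile_eq_zero (by linarith)

lemma weight_continuous (s : ℝ) : Continuous fun ξ : ℝ => (1 + |ξ|) ^ (2 * s) :=
  Continuous.rpow_const (by fun_prop) fun ξ => Or.inl (by positivity)

/-! ### The dispersion relation near a high frequency -/

lemma disp_zero_sub_le {a : ℝ} (ha : 0 ≤ a) {ξ : ℝ} (hξ : |ξ| ≤ 1 / 2) :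
    |disp a ξ| ≤ 1 / 2 := by
  unfold disp
  rw [abs_mul, abs_of_nonneg (by positivity : 0 ≤ |ξ| ^ (1 + a))]
  have : |ξ| ^ (1 + a) ≤ 1 := Real.rpow_le_one (abs_nonneg _) (by linarith) (by linarith)
  nlinarith [abs_nonneg ξ]

/-- By the mean value theorem, `ω` varies by at most `12 N^(1+a) |ξ - N|` near `N`. -/
lemma disp_sub_le {a : ℝ} (ha : a ∈ Set.Ico (0 : ℝ) 1) {N ξ : ℝ} (hN : 1 ≤ N)
    (hξ : |ξ - N| ≤ 1 / 2) :
    |disp a ξ - disp a N| ≤ 12 * N ^ (1 + a) * |ξ - N| := by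
  obtain ⟨ha0, ha1⟩ := ha
  have hpos : ∀ x ∈ Set.Icc (1 / 2 * N) (2 * N), 0 < x := fun x hx => by linarith [hx.1]
  have hdisp : ∀ x ∈ Set.Icc (1 / 2 * N) (2 * N), disp a x = x ^ (2 + a) := by
    intro x hx
    have := hpos x hx
    unfold disp
    rw [abs_of_pos this, show 2 + a = 1 + (1 + a) by ring, Real.rpow_add this 1 (1 + a),
      Real.rpow_one]
  have hξm : ξ ∈ Set.Icc (1 / 2 * N) (2 * N) := by
    rw [abs_le] at hξ
    constructor <;> linarith
  have hNm : N ∈ Set.Icc (1 / 2 * N) (2 * N) := by constructor <;> linarith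
  rw [hdisp ξ hξm, hdisp N hNm]
  have h := Convex.norm_image_sub_le_of_norm_hasDerivWithin_le (𝕜 := ℝ)
    (f := fun x : ℝ => x ^ (2 + a)) (f' := fun x => (2 + a) * x ^ (2 + a - 1))
    (s := Set.Icc (1 / 2 * N) (2 * N)) (C := 12 * N ^ (1 + a))
    (fun x hx => (Real.hasDerivAt_rpow_const (Or.inl (hpos x hx).ne')).hasDerivWithinAt)
    (fun x hx => ?_) (convex_Icc _ _) hNm hξm
  · simpa [Real.norm_eq_abs] using h
  · have hx0 := hpos x hx
    rw [Real.norm_eq_abs, abs_of_nonneg (by positivity), show 2 + a - 1 = 1 + a by ring]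
    have h1 : x ^ (1 + a) ≤ (2 * N) ^ (1 + a) :=
      Real.rpow_le_rpow hx0.le hx.2 (by linarith)
    rw [Real.mul_rpow (by norm_num) (by linarith)] at h1
    have h2 : (2 : ℝ) ^ (1 + a) ≤ 4 := by
      have : (2 : ℝ) ^ (1 + a) ≤ (2 : ℝ) ^ (2 : ℝ) :=
        Real.rpow_le_rpow_of_exponent_le (by norm_num) (by linarith)
      norm_num at this
      exact this
    have h3 : x ^ (1 + a) ≤ 4 * N ^ (1 + a) :=
      h1.trans (mul_le_mul_of_nonneg_right h2 (by positivity))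
    calc (2 + a) * x ^ (1 + a) ≤ 3 * (4 * N ^ (1 + a)) :=
          mul_le_mul (by linarith) h3 (by positivity) (by norm_num)
      _ = _ := by ring

/-! ### The counterexample -/

/-- The squared `L²` norm of the profile. -/
def profileMass : ℝ := ∫ ξ, ‖profile ξ‖ ^ 2

/-- The squared `L²` norm of the self-convolution of the profile. -/
def convMass : ℝ := ∫ ξ, ‖profileConv ξ‖ ^ 2

lemma profileMass_nonneg : 0 ≤ profileMass := integral_nonneg fun _ => by positivity

lemma convMass_pos : 0 < convMass := by
  refine Continuous.integral_pos_of_hasCompactSupport_nonneg_nonzero (x := 0)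
    (by have := profileConv_continuous; fun_prop) ?_ (fun _ => by positivity)
    (pow_ne_zero 2 (norm_ne_zero_iff.2 profileConv_zero_ne))
  have := (hasCompactSupport_of_half fun x hx => profileConv_eq_zero hx).norm
  simp only [pow_two]
  exact this.mul_left

/-- An upper bound for the norm of a space-time wave packet based at the point `(c, ω(c))` of the
dispersion curve. -/
lemma Xnorm_packet {a : ℝ} {χ₀ χ : ℝ → ℝ} (hχ : DyadicCutoffs χ₀ χ) (b s c δ m : ℝ)
    (hδ : 0 < δ) (hdisp : ∀ ξ, |ξ - c| ≤ δ / 2 → |disp a ξ - disp a c| ≤ 1 / 2)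
    (hm : ∀ ξ, |ξ - c| ≤ δ / 2 → (1 + |ξ|) ^ (2 * s) ≤ m) :
    Xnorm a χ₀ χ b s
        (fun p => schwartzTensor (packet c δ hδ) (packet (disp a c) 1 one_pos) p) ≤
      (m * δ * profileMass ^ 2) ^ ((1 : ℝ) / 2) := by
  rw [Xnorm_eq_of_modulation hχ b s _ (fun ξ => profile ((ξ - c) / δ))
    (fun lam => profile ((lam - disp a c) / 1))]
  · refine Real.rpow_le_rpow (mul_nonneg (integral_nonneg fun _ => by positivity)
      (integral_nonneg fun _ => by positivity)) ?_ (by norm_num)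
    rw [integral_rescale (fun ξ => ‖profile ξ‖ ^ 2) (disp a c) 1 one_pos]
    have h := weighted_le profile_contDiff.continuous (fun x hx => profile_half hx) c δ hδ
      (weight_continuous s) m hm
    calc _ ≤ (m * (δ * profileMass)) * (1 * profileMass) :=
          mul_le_mul_of_nonneg_right h (by linarith [profileMass_nonneg])
      _ = _ := by ring
  · intro ξ lam
    rw [← FT1_packet c δ hδ, ← FT1_packet (disp a c) 1 one_pos, ← FT2_tensor]
    rfl
  · intro ξ lam h1 h2
    have e1 := hdisp ξ (abs_sub_le_of_ne_zero (fun x hx => profile_half hx) hδ h1)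
    have e2 := abs_sub_le_of_ne_zero (fun x hx => profile_half hx) one_pos h2
    rw [abs_le] at *
    constructor <;> linarith

/-- A lower bound for the norm of the derivative of the product of the packets at `(0, 0)` and
at `(c, ω(c))`. -/
lemma le_Xnorm_deriv {a : ℝ} {χ₀ χ : ℝ → ℝ} (hχ : DyadicCutoffs χ₀ χ) (b s c δ m : ℝ)
    (hδ : 0 < δ) (hm0 : 0 ≤ m)
    (hdisp : ∀ ξ, |ξ - c| ≤ δ / 2 → |disp a ξ - disp a c| ≤ 1 / 2)
    (hm : ∀ ξ, |ξ - c| ≤ δ / 2 → m ≤ (1 + |ξ|) ^ (2 * s) * ξ ^ 2) :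
    (m * δ ^ 3 * (convMass / (4 * Real.pi ^ 2)) ^ 2) ^ ((1 : ℝ) / 2) ≤
      Xnorm a χ₀ χ b s (fun p : ℝ × ℝ => deriv (fun x =>
        schwartzTensor (packet 0 δ hδ) (packet 0 1 one_pos) (x, p.2) *
        schwartzTensor (packet c δ hδ) (packet (disp a c) 1 one_pos) (x, p.2)) p.1) := by
  have hder : (fun p : ℝ × ℝ => deriv (fun x =>
        schwartzTensor (packet 0 δ hδ) (packet 0 1 one_pos) (x, p.2) *
        schwartzTensor (packet c δ hδ) (packet (disp a c) 1 one_pos) (x, p.2)) p.1) =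
      fun p => deriv (packetProd c δ hδ) p.1 * packetProd (disp a c) 1 one_pos p.2 := by
    ext p
    rw [← deriv_mul_const (packetProd c δ hδ).differentiable.differentiableAt]
    congr 1
    ext x
    rw [schwartzTensor_apply, schwartzTensor_apply, packetProd_apply, packetProd_apply]
    ring
  rw [hder, Xnorm_eq_of_modulation hχ b s _
    (fun ξ => -(Complex.I * ξ) *
      (((δ / (2 * Real.pi) : ℝ) : ℂ) * profileConv ((ξ - c) / δ)))
    (fun lam => ((1 / (2 * Real.pi) : ℝ) : ℂ) * profileConv ((lam - disp a c) / 1))]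
  · have hpi := Real.pi_pos
    have hK := convMass_pos
    refine Real.rpow_le_rpow (by positivity) ?_ (by norm_num)
    have hA : ∀ ξ : ℝ, (1 + |ξ|) ^ (2 * s) * ‖-(Complex.I * ξ) *
        (((δ / (2 * Real.pi) : ℝ) : ℂ) * profileConv ((ξ - c) / δ))‖ ^ 2 =
        (δ / (2 * Real.pi)) ^ 2 *
          (((1 + |ξ|) ^ (2 * s) * ξ ^ 2) * ‖profileConv ((ξ - c) / δ)‖ ^ 2) := by
      intro ξ
      rw [norm_mul, norm_mul, norm_neg, norm_mul, Complex.norm_I, Complex.norm_real,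
        Complex.norm_real, Real.norm_eq_abs, Real.norm_eq_abs, one_mul, mul_pow, mul_pow, sq_abs,
        sq_abs]
      ring
    have hB : ∀ lam : ℝ, ‖((1 / (2 * Real.pi) : ℝ) : ℂ) *
        profileConv ((lam - disp a c) / 1)‖ ^ 2 =
        (1 / (2 * Real.pi)) ^ 2 * ‖profileConv ((lam - disp a c) / 1)‖ ^ 2 := by
      intro lam
      rw [norm_mul, Complex.norm_real, Real.norm_eq_abs, mul_pow, sq_abs]
    simp only [hA, hB]
    rw [integral_const_mul, integral_const_mul,
      integral_rescale (fun ξ => ‖profileConv ξ‖ ^ 2) (disp a c) 1 one_pos]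
    have h := le_weighted profileConv_continuous (fun x hx => profileConv_eq_zero hx) c δ hδ
      ((weight_continuous s).mul (continuous_pow 2)) m hm
    calc _ = (δ / (2 * Real.pi)) ^ 2 * (m * (δ * convMass)) *
          ((1 / (2 * Real.pi)) ^ 2 * (1 * convMass)) := by field_simp; ring
      _ ≤ _ := by
          refine mul_le_mul_of_nonneg_right (mul_le_mul_of_nonneg_left h (by positivity)) ?_
          change 0 ≤ (1 / (2 * Real.pi)) ^ 2 * (1 * convMass)
          positivity
  · intro ξ lam
    rw [← FT1_packetProd c δ hδ, ← FT1_packetProd (disp a c) 1 one_pos, ← FT1_deriv,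
      ← FT2_tensor]
  · intro ξ lam h1 h2
    have e1 := hdisp ξ (abs_sub_le_of_ne_zero (fun x hx => profileConv_eq_zero hx) hδ
      (right_ne_zero_of_mul (right_ne_zero_of_mul h1)))
    have e2 := abs_sub_le_of_ne_zero (fun x hx => profileConv_eq_zero hx) one_pos
      (right_ne_zero_of_mul h2)
    rw [abs_le] at *
    constructor <;> linarith

theorem statement12 (a : ℝ) (ha : a ∈ Set.Ico (0 : ℝ) 1)
    (χ₀ χ : ℝ → ℝ) (hχ : DyadicCutoffs χ₀ χ) (b : ℝ) :
    ¬ ∃ C > 0, ∀ u₁ u₂ : SchwartzMap (ℝ × ℝ) ℂ,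
      Xnorm a χ₀ χ (-b) (1 / 2 + a / 2)
          (fun p : ℝ × ℝ => deriv (fun x => u₁ (x, p.2) * u₂ (x, p.2)) p.1) ≤
        C * Xnorm a χ₀ χ b (1 / 2 + a / 2) (fun p => u₁ p) *
          Xnorm a χ₀ χ b (1 / 2 + a / 2) (fun p => u₂ p) := by
  rintro ⟨C, hC, H⟩
  obtain ⟨ha0, ha1⟩ := ha
  set k := convMass / (4 * Real.pi ^ 2) with hk
  have hk0 : 0 < k := div_pos convMass_pos (by have := Real.pi_pos; positivity)
  set M := profileMass with hM
  have hM0 : 0 ≤ M := profileMass_nonneg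
  have hd0 : disp a 0 = 0 := by simp [disp]
  have h2s : 2 * (1 / 2 + a / 2) = 1 + a := by ring
  have hpow : ∀ y : ℝ, 1 ≤ y → y ^ (1 + a) ≤ y ^ 2 := fun y hy => by
    rw [← Real.rpow_two]
    exact Real.rpow_le_rpow_of_exponent_le hy (by linarith)
  -- The estimate, tested on the packets at `0` and at `N` with `24 δ N^(1+a) = 1`, bounds `N^(1-a)`.
  have key : ∀ N : ℝ, 1 ≤ N → N ^ (1 - a) * k ^ 2 ≤ 3456 * C ^ 2 * M ^ 4 := by
    intro N hN
    have hN0 : 0 < N := by linarith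
    set P := N ^ (1 + a) with hP
    have hP1 : 1 ≤ P := Real.one_le_rpow hN (by linarith)
    have hP0 : 0 < P := by linarith
    obtain ⟨δ, hδdef⟩ : ∃ δ : ℝ, δ = (24 * P)⁻¹ := ⟨_, rfl⟩
    have hδ : 0 < δ := by rw [hδdef]; positivity
    have hPδ : 24 * P * δ = 1 := by rw [hδdef]; exact mul_inv_cancel₀ (by positivity)
    have hδ1 : δ ≤ 1 := by nlinarith
    have hdispN : ∀ ξ, |ξ - N| ≤ δ / 2 → |disp a ξ - disp a N| ≤ 1 / 2 := by
      intro ξ hξ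
      have h := disp_sub_le ⟨ha0, ha1⟩ hN (ξ := ξ) (by linarith)
      have h' : 12 * P * |ξ - N| ≤ 12 * P * (δ / 2) :=
        mul_le_mul_of_nonneg_left hξ (by positivity)
      linarith
    have hlow := Xnorm_packet (a := a) hχ b (1 / 2 + a / 2) 0 δ 4 hδ
      (fun ξ hξ => by
        rw [hd0, sub_zero]
        rw [sub_zero] at hξ
        exact disp_zero_sub_le ha0 (by linarith))
      (fun ξ hξ => by
        rw [sub_zero] at hξ
        rw [h2s]
        refine (hpow _ (by linarith [abs_nonneg ξ])).trans ?_
        nlinarith [abs_nonneg ξ])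
    rw [hd0] at hlow
    have hhigh := Xnorm_packet (a := a) hχ b (1 / 2 + a / 2) N δ (9 * P) hδ hdispN
      (fun ξ hξ => by
        rw [h2s]
        have h1 : 1 + |ξ| ≤ 3 * N := by
          have : |ξ| ≤ 2 * N := by
            rw [abs_le] at *
            constructor <;> linarith
          linarith
        calc (1 + |ξ|) ^ (1 + a) ≤ (3 * N) ^ (1 + a) :=
              Real.rpow_le_rpow (by positivity) h1 (by linarith)
          _ = 3 ^ (1 + a) * P := Real.mul_rpow (by norm_num) hN0.le
          _ ≤ 9 * P := by
              refine mul_le_mul_of_nonneg_right ?_ hP0.le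
              refine (hpow 3 (by norm_num)).trans (by norm_num))
    have hprod := le_Xnorm_deriv (a := a) hχ (-b) (1 / 2 + a / 2) N δ (P * (N ^ 2 / 4)) hδ
      (by positivity) hdispN
      (fun ξ hξ => by
        rw [h2s]
        rw [abs_le] at hξ
        have h1 : N ≤ 1 + |ξ| := by linarith [le_abs_self ξ]
        refine mul_le_mul (Real.rpow_le_rpow hN0.le h1 (by linarith)) ?_ (by positivity)
          (by positivity)
        nlinarith)
    have hmain := hprod.trans (H (schwartzTensor (packet 0 δ hδ) (packet 0 1 one_pos))
      (schwartzTensor (packet N δ hδ) (packet (disp a N) 1 one_pos)))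
    have hX0 : 0 ≤ Xnorm a χ₀ χ b (1 / 2 + a / 2)
        (fun p => schwartzTensor (packet N δ hδ) (packet (disp a N) 1 one_pos) p) :=
      tsum_nonneg fun j => mul_nonneg (by positivity) (Real.rpow_nonneg
        (integral_nonneg fun p => mul_nonneg (mul_nonneg (by
          unfold chiJ
          split_ifs
          exacts [(hχ.mem0 _).1, (hχ.mem1 _).1]) (by positivity)) (by positivity)) _)
    have hall := hmain.trans (mul_le_mul (mul_le_mul_of_nonneg_left hlow hC.le) hhigh hX0
      (by positivity))
    rw [← Real.sqrt_eq_rpow, ← Real.sqrt_eq_rpow, ← Real.sqrt_eq_rpow] at hall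
    have hsq := pow_le_pow_left₀ (Real.sqrt_nonneg _) hall 2
    rw [mul_pow, mul_pow, Real.sq_sqrt (by positivity), Real.sq_sqrt (by positivity),
      Real.sq_sqrt (by positivity), ← hk, ← hM] at hsq
    have hN2 : N ^ (1 - a) = 24 * N ^ 2 * δ := by
      have h1 : N ^ (1 - a) * P = N ^ 2 := by
        rw [hP, ← Real.rpow_add hN0, ← Real.rpow_two]
        congr 1
        ring
      calc N ^ (1 - a) = N ^ (1 - a) * (24 * P * δ) := by rw [hPδ, mul_one]
        _ = 24 * (N ^ (1 - a) * P) * δ := by ring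
        _ = _ := by rw [h1]
    rw [hN2]
    have hQ : 0 < P * δ ^ 2 / 96 := by positivity
    refine le_of_mul_le_mul_left ?_ hQ
    calc P * δ ^ 2 / 96 * (24 * N ^ 2 * δ * k ^ 2) = P * (N ^ 2 / 4) * δ ^ 3 * k ^ 2 := by ring
      _ ≤ _ := hsq
      _ = _ := by ring
  have htend : Filter.Tendsto (fun N : ℝ => N ^ (1 - a) * k ^ 2) Filter.atTop Filter.atTop :=
    (tendsto_rpow_atTop (by linarith)).atTop_mul_const (by positivity)
  obtain ⟨N, hN1, hN2⟩ := ((Filter.eventually_ge_atTop 1).and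
    (htend.eventually_gt_atTop (3456 * C ^ 2 * M ^ 4))).exists
  exact absurd (key N hN1) (not_le.2 hN2)
end
end

section
/- Let a ∈ (0,1), s ∈ ℝ, and b ∈ (0,1/2). There exists a constant C > 0, independent of δ, such that for every δ ∈ (0,1) and every Schwartz function f on ℝ² one has ‖ψ(t/δ) f‖_{X̃^b_s} ≤ C ‖f‖_{X̃^b_s}, where ψ(t/δ) f denotes the function (x,t) ↦ ψ(t/δ) f(x,t). -/
/-!
Multiplying by `ψ(t/δ)` averages the Fourier transform in the time frequency: by Fourier
inversion for `ψ`,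
`FT2 (ψ(t/δ) f)(ξ, λ) = ∫ ψ̂(v) FT2 f(ξ, λ + r v) dv` with `r = 2π/δ` (`FT2_cutoff_eq`).
Put `β = 2b ∈ (0,1)` and `h = |ψ̂|`. The estimate rests on the fact that `(1+|z|)^(-β)` is an
`A₁`-type weight: uniformly in `r > 0` and `z`,
`∫ h(v) (1+|z + r v|)^(-β) dv ≤ M (1+|z|)^(-β)` (`exists_average_bound`).
This holds because `(1+|z|)^β ≤ (1+|z+rv|)^β + (r|v|)^β`, and after division by `(1+|z+rv|)^β`
the last term is at most `|v|^β |v + z/r|^(-β)`, whose integral against the rapidly decaying `h`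
is bounded uniformly in `z/r` since `β < 1` makes the singularity integrable.

Cauchy-Schwarz with the weights `(1+|z+rv|)^(∓β)`, `z = λ - ω(ξ)`, bounds
`(1+|z|)^β |FT2 (ψ(t/δ) f)(ξ, λ)|²` by
`M ∫ h(v) (1+|z+rv|)^β |FT2 f(ξ, λ+rv)|² dv`; integrating in `(ξ, λ)` with Tonelli and translation
invariance gives the constant `M ∫ h` (`lintegral_xWeight_le`). The estimate is carried out for
lower integrals; going back to Bochner integrals needs the right-hand side to be finite, which
follows from the Schwartz decay of `FT2 f` (`exists_schwartz_FT2`, `integrable_xWeight_mul`).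
-/


open MeasureTheory Complex

noncomputable section

/-! ### The averaging estimate for the weight -/

/-- Cauchy-Schwarz for the measure `h dμ`, with reciprocal weights `u` and `v`. -/
lemma lintegral_mul_sq_le {α : Type*} [MeasurableSpace α] (μ : Measure α)
    {h g u v : α → ENNReal} (hh : Measurable h) (hg : Measurable g) (hu : Measurable u)
    (hv : Measurable v) (huv : ∀ x, u x * v x = 1) :
    (∫⁻ x, h x * g x ∂μ) ^ 2 ≤ (∫⁻ x, h x * u x ∂μ) * ∫⁻ x, h x * (v x * g x ^ 2) ∂μ := by
  have key : ∀ x, h x * g x =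
      (h x * u x) ^ (1 / 2 : ℝ) * (h x * (v x * g x ^ 2)) ^ (1 / 2 : ℝ) := by
    intro x
    rw [← ENNReal.mul_rpow_of_nonneg _ _ (by norm_num)]
    have : h x * u x * (h x * (v x * g x ^ 2)) = (h x * g x) ^ (2 : ℝ) := by
      rw [ENNReal.rpow_two]
      calc _ = (u x * v x) * (h x * g x) ^ 2 := by ring
        _ = _ := by rw [huv, one_mul]
    rw [this, ← ENNReal.rpow_mul]
    norm_num
  have hold := ENNReal.lintegral_mul_le_Lp_mul_Lq μ Real.HolderConjugate.two_two
    (f := fun x => (h x * u x) ^ (1 / 2 : ℝ))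
    (g := fun x => (h x * (v x * g x ^ 2)) ^ (1 / 2 : ℝ))
    (by fun_prop) (by fun_prop)
  simp only [Pi.mul_apply, ← key, ← ENNReal.rpow_mul] at hold
  norm_num at hold
  calc _ ≤ ((∫⁻ x, h x * u x ∂μ) ^ (1 / 2 : ℝ) *
        (∫⁻ x, h x * (v x * g x ^ 2) ∂μ) ^ (1 / 2 : ℝ)) ^ 2 := by
        norm_num; gcongr
    _ = _ := by
        rw [← ENNReal.rpow_two, ENNReal.mul_rpow_of_nonneg _ _ (by norm_num),
          ← ENNReal.rpow_mul, ← ENNReal.rpow_mul]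
        norm_num

/-- The singularity `|x|^{-β}`, cut off to `[-1,1]`. -/
noncomputable def localSing (β x : ℝ) : ℝ := (Set.Icc (-1 : ℝ) 1).indicator (fun x => |x| ^ (-β)) x

lemma localSing_nonneg (β x : ℝ) : 0 ≤ localSing β x :=
  Set.indicator_nonneg (fun _ _ => by positivity) x

lemma integrable_localSing {β : ℝ} (hβ : β < 1) : Integrable (localSing β) := by
  unfold localSing
  refine (integrable_indicator_iff measurableSet_Icc).2 ?_
  have h1 : IntervalIntegrable (fun x : ℝ => |x| ^ (-β)) volume 0 1 := by
    refine (intervalIntegral.intervalIntegrable_rpow' (by linarith : -1 < -β)).congr ?_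
    intro x hx
    rw [Set.uIoc_of_le zero_le_one] at hx
    simp [abs_of_pos hx.1]
  have h2 : IntervalIntegrable (fun x : ℝ => |x| ^ (-β)) volume (-1) 0 := by
    have := (IntervalIntegrable.iff_comp_neg (f := fun x : ℝ => |x| ^ (-β)) (a := 0) (b := 1)).1 h1
    simpa using this.symm
  have := h2.trans h1
  rwa [intervalIntegrable_iff_integrableOn_Icc_of_le (by norm_num)] at this

/-- The case `v + z / r = 0` is excluded because the junk value `0 ^ (-β) = 0` would make the right-hand
side too small there. -/
lemma weight_ratio_le {β : ℝ} (h0 : 0 < β) (h1 : β < 1) {r : ℝ} (hr : 0 < r) (z v : ℝ)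
    (hv : v + z / r ≠ 0) :
    (1 + |z|) ^ β * (1 + |z + r * v|) ^ (-β) ≤
      1 + |v| ^ β * (1 + localSing β (v + z / r)) := by
  set x := v + z / r with hx
  have hxr : z + r * v = r * x := by rw [hx]; field_simp; ring
  have hx0 : 0 < |x| := abs_pos.2 hv
  have htri : |z| ≤ |z + r * v| + r * |v| := by
    have := abs_sub (z + r * v) (r * v)
    rw [abs_mul, abs_of_pos hr] at this
    simpa using this
  have hA : (1 + |z|) ^ β ≤ (1 + |z + r * v|) ^ β + (r * |v|) ^ β :=
    (Real.rpow_le_rpow (by positivity) (by linarith) h0.le).trans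
      (Real.rpow_add_le_add_rpow (by positivity) (by positivity) h0.le h1.le)
  have hB : (1 + |z + r * v|) ^ (-β) ≤ (r * |x|) ^ (-β) := by
    refine Real.rpow_le_rpow_of_nonpos (by positivity) ?_ (by linarith)
    rw [hxr, abs_mul, abs_of_pos hr]; linarith
  have hC : |x| ^ (-β) ≤ 1 + localSing β x := by
    by_cases hm : x ∈ Set.Icc (-1 : ℝ) 1
    · simp [localSing, hm]
    · have : 1 ≤ |x| := by
        rw [Set.mem_Icc, ← abs_le] at hm
        exact (not_le.1 hm).le
      have h2 := Real.rpow_le_one_of_one_le_of_nonpos this (by linarith : -β ≤ 0)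
      linarith [localSing_nonneg β x]
  calc _ ≤ ((1 + |z + r * v|) ^ β + (r * |v|) ^ β) * (1 + |z + r * v|) ^ (-β) := by gcongr
    _ = 1 + (r * |v|) ^ β * (1 + |z + r * v|) ^ (-β) := by
        rw [add_mul, ← Real.rpow_add (by positivity)]; simp
    _ ≤ 1 + (r * |v|) ^ β * (r * |x|) ^ (-β) := by gcongr
    _ = 1 + |v| ^ β * |x| ^ (-β) := by
        rw [Real.mul_rpow hr.le (abs_nonneg _), Real.mul_rpow hr.le (abs_nonneg _)]
        have : r ^ β * r ^ (-β) = 1 := by rw [← Real.rpow_add hr]; simp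
        linear_combination (|v| ^ β * |x| ^ (-β)) * this
    _ ≤ _ := by gcongr

/-- The `A₁` property of the weight `(1+|z|)^(-β)`: its averages against the kernel `h` dilated by
`r` are at most a constant times its value, with a constant independent of `r`. -/
lemma exists_average_bound {β : ℝ} (h0 : 0 < β) (h1 : β < 1) {h : ℝ → ℝ} {C₀ : ℝ}
    (hC₀ : 0 ≤ C₀) (hh0 : ∀ v, 0 ≤ h v) (hh : ∀ v, h v ≤ C₀ * ((1 + v ^ 2)⁻¹) ^ 2) :
    ∃ M : ℝ, ∀ r > 0, ∀ z : ℝ,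
      ENNReal.ofReal ((1 + |z|) ^ β) *
        ∫⁻ v, ENNReal.ofReal (h v) * ENNReal.ofReal ((1 + |z + r * v|) ^ (-β)) ≤
        ENNReal.ofReal M := by
  refine ⟨C₀ * (2 * Real.pi + ∫ x, localSing β x), fun r hr z => ?_⟩
  set F : ℝ → ℝ := fun v => C₀ * (2 * (1 + v ^ 2)⁻¹ + localSing β (v + z / r)) with hF
  have hS : Integrable fun v => localSing β (v + z / r) :=
    (integrable_localSing h1).comp_add_right _
  have hFi : Integrable F := ((integrable_inv_one_add_sq.const_mul 2).add hS).const_mul C₀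
  have hFint : ∫ v, F v = C₀ * (2 * Real.pi + ∫ x, localSing β x) := by
    simp only [hF]
    rw [integral_const_mul, integral_add (integrable_inv_one_add_sq.const_mul 2) hS,
      integral_const_mul, integral_univ_inv_one_add_sq,
      integral_add_right_eq_self (localSing β)]
  have hF0 : ∀ v, 0 ≤ F v := fun v =>
    mul_nonneg hC₀ (add_nonneg (by positivity) (localSing_nonneg _ _))
  rw [← hFint, ofReal_integral_eq_lintegral_ofReal hFi (Filter.Eventually.of_forall hF0),
    ← lintegral_const_mul' _ _ ENNReal.ofReal_ne_top]
  refine lintegral_mono_ae ?_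
  filter_upwards [Measure.ae_ne volume (-(z / r))] with v hv
  rw [← ENNReal.ofReal_mul (hh0 v), ← ENNReal.ofReal_mul (by positivity)]
  refine ENNReal.ofReal_le_ofReal ?_
  have hv' : v + z / r ≠ 0 := fun h => hv (by linarith)
  have hw := weight_ratio_le h0 h1 hr z v hv'
  have hS0 := localSing_nonneg β (v + z / r)
  have hvβ : |v| ^ β ≤ 1 + v ^ 2 := by
    rcases le_total |v| 1 with h | h
    · have := Real.rpow_le_one (abs_nonneg v) h h0.le
      nlinarith [sq_nonneg v]
    · have := Real.rpow_le_rpow_of_exponent_le h (show β ≤ (2 : ℕ) by norm_num; linarith)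
      rw [Real.rpow_natCast, sq_abs] at this
      linarith
  have hq : 0 < 1 + v ^ 2 := by positivity
  have hq1 : (1 + v ^ 2)⁻¹ ≤ 1 := inv_le_one_of_one_le₀ (by nlinarith [sq_nonneg v])
  have hq0 : 0 < (1 + v ^ 2)⁻¹ := by positivity
  calc _ = h v * ((1 + |z|) ^ β * (1 + |z + r * v|) ^ (-β)) := by ring
    _ ≤ (C₀ * ((1 + v ^ 2)⁻¹) ^ 2) * (1 + |v| ^ β * (1 + localSing β (v + z / r))) := by
        gcongr
        exact hh v
    _ ≤ (C₀ * ((1 + v ^ 2)⁻¹) ^ 2) * (1 + (1 + v ^ 2) * (1 + localSing β (v + z / r))) := by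
        gcongr
    _ = C₀ * (((1 + v ^ 2)⁻¹) ^ 2 + (1 + v ^ 2)⁻¹ * (1 + localSing β (v + z / r))) := by
        field_simp
    _ ≤ F v := by
        refine mul_le_mul_of_nonneg_left ?_ hC₀
        nlinarith

open FourierTransform

/-! ### Schwartz decay and integrability -/

/-- `FT2 f` is again a Schwartz function. Mathlib's Fourier transform needs an inner product space,
so `f` is transported to `WithLp 2 (ℝ × ℝ)`; the change of convention is the dilation by
`-1/(2π)`. -/
lemma exists_schwartz_FT2 (f : SchwartzMap (ℝ × ℝ) ℂ) :
    ∃ Φ : SchwartzMap (ℝ × ℝ) ℂ, ∀ p : ℝ × ℝ, Φ p = FT2 (fun p => f p) p.1 p.2 := by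
  have hc : (-(2 * Real.pi)⁻¹ : ℝ) ≠ 0 := by
    have := Real.pi_pos
    simp [this.ne']
  set F : SchwartzMap (WithLp 2 (ℝ × ℝ)) ℂ :=
    SchwartzMap.compCLMOfContinuousLinearEquiv ℂ (WithLp.prodContinuousLinearEquiv 2 ℝ ℝ ℝ) f
    with hF
  refine ⟨SchwartzMap.compCLMOfContinuousLinearEquiv ℂ
    ((ContinuousLinearEquiv.smulLeft (Units.mk0 _ hc)).trans
      (WithLp.prodContinuousLinearEquiv 2 ℝ ℝ ℝ).symm) (𝓕 F), fun p => ?_⟩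
  rw [SchwartzMap.compCLMOfContinuousLinearEquiv_apply, SchwartzMap.fourier_coe,
    Function.comp_apply, Real.fourier_eq']
  unfold FT2
  rw [← (WithLp.volume_preserving_symm_measurableEquiv_toLp_prod ℝ ℝ).integral_comp']
  refine integral_congr_ae (Filter.Eventually.of_forall fun x => ?_)
  simp only [smul_eq_mul, WithLp.prod_inner_apply]
  have hpi := Real.pi_ne_zero
  have hfx : F x = f ((MeasurableEquiv.toLp 2 (ℝ × ℝ)).symm x) := rfl
  rw [hfx, mul_comm I]
  congr 4
  simp [Units.smul_def]
  field_simp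
  ring

lemma schwartz_decay {E : Type*} [NormedAddCommGroup E] [NormedSpace ℝ E]
    (f : SchwartzMap E ℂ) (k : ℕ) :
    ∃ D : ℝ, 0 ≤ D ∧ ∀ x, (1 + ‖x‖) ^ k * ‖f x‖ ≤ D := by
  refine ⟨_, ?_, fun x => by
    simpa using SchwartzMap.one_add_le_sup_seminorm_apply (𝕜 := ℝ) (m := (k, 0)) le_rfl le_rfl f x⟩
  positivity

/-- The weight of the `X̃^b_s` norm. -/
def xWeight (a b s : ℝ) (p : ℝ × ℝ) : ℝ :=
  (1 + |p.2 - disp a p.1|) ^ (2 * b) * (1 + |p.1|) ^ (2 * s)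

lemma xWeight_nonneg (a b s : ℝ) (p : ℝ × ℝ) : 0 ≤ xWeight a b s p := by
  unfold xWeight; positivity

lemma measurable_disp (a : ℝ) : Measurable (disp a) := by
  unfold disp; fun_prop

lemma measurable_xWeight (a b s : ℝ) : Measurable (xWeight a b s) := by
  have := measurable_disp a
  unfold xWeight; fun_prop

lemma xWeight_le {a b : ℝ} (ha : a ∈ Set.Ioo (0 : ℝ) 1) (hb : b ∈ Set.Ioo (0 : ℝ) (1 / 2))
    (s : ℝ) : ∃ n : ℕ, ∀ p : ℝ × ℝ, xWeight a b s p ≤ 2 * (1 + ‖p‖) ^ n := by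
  refine ⟨3 + ⌈2 * |s|⌉₊, fun p => ?_⟩
  have h1 : |p.1| ≤ ‖p‖ := norm_fst_le p
  have h2 : |p.2| ≤ ‖p‖ := norm_snd_le p
  have hp : 1 ≤ 1 + ‖p‖ := by linarith [norm_nonneg p]
  have hd : |disp a p.1| ≤ (1 + ‖p‖) ^ 3 := by
    unfold disp
    rw [abs_mul, abs_of_nonneg (by positivity : 0 ≤ |p.1| ^ (1 + a))]
    have : |p.1| ^ (1 + a) ≤ (1 + ‖p‖) ^ 2 := by
      calc |p.1| ^ (1 + a) ≤ (1 + ‖p‖) ^ (1 + a) :=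
            Real.rpow_le_rpow (abs_nonneg _) (by linarith) (by linarith [ha.1])
        _ ≤ (1 + ‖p‖) ^ ((2 : ℕ) : ℝ) :=
            Real.rpow_le_rpow_of_exponent_le hp (by push_cast; linarith [ha.2])
        _ = _ := Real.rpow_natCast _ _
    calc _ ≤ (1 + ‖p‖) * (1 + ‖p‖) ^ 2 := by gcongr; linarith
      _ = _ := by ring
  have hA : (1 + |p.2 - disp a p.1|) ^ (2 * b) ≤ 2 * (1 + ‖p‖) ^ 3 := by
    have h3 := abs_sub p.2 (disp a p.1)
    have h4 : 1 + ‖p‖ ≤ (1 + ‖p‖) ^ 3 := le_self_pow₀ hp (by norm_num)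
    calc (1 + |p.2 - disp a p.1|) ^ (2 * b) ≤ (1 + |p.2 - disp a p.1|) ^ (1 : ℝ) :=
          Real.rpow_le_rpow_of_exponent_le (by linarith [abs_nonneg (p.2 - disp a p.1)])
            (by linarith [hb.2])
      _ ≤ _ := by rw [Real.rpow_one]; linarith
  have hB : (1 + |p.1|) ^ (2 * s) ≤ (1 + ‖p‖) ^ ⌈2 * |s|⌉₊ := by
    calc (1 + |p.1|) ^ (2 * s) ≤ (1 + |p.1|) ^ ((⌈2 * |s|⌉₊ : ℕ) : ℝ) :=
          Real.rpow_le_rpow_of_exponent_le (by linarith [abs_nonneg p.1])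
            ((by linarith [le_abs_self s] : 2 * s ≤ 2 * |s|).trans (Nat.le_ceil _))
      _ = (1 + |p.1|) ^ ⌈2 * |s|⌉₊ := Real.rpow_natCast _ _
      _ ≤ _ := by gcongr
  unfold xWeight
  calc _ ≤ (2 * (1 + ‖p‖) ^ 3) * (1 + ‖p‖) ^ ⌈2 * |s|⌉₊ := by gcongr
    _ = _ := by ring

lemma integrable_xWeight_mul {a b : ℝ} (ha : a ∈ Set.Ioo (0 : ℝ) 1)
    (hb : b ∈ Set.Ioo (0 : ℝ) (1 / 2)) (s : ℝ) (Φ : SchwartzMap (ℝ × ℝ) ℂ) :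
    Integrable fun p => xWeight a b s p * ‖Φ p‖ ^ 2 := by
  obtain ⟨n, hn⟩ := xWeight_le ha hb s
  obtain ⟨D, hD0, hD⟩ := schwartz_decay Φ (n + 3)
  have hi : Integrable (fun p : ℝ × ℝ => (2 * D ^ 2) * (1 + ‖p‖) ^ (-(3 : ℝ))) :=
    (integrable_one_add_norm (by simp; norm_num)).const_mul _
  refine hi.mono' ?_ (Filter.Eventually.of_forall fun p => ?_)
  · have h1 := measurable_xWeight a b s
    have h2 := Φ.continuous.measurable
    exact (by fun_prop : Measurable _).aestronglyMeasurable
  · have hp : 1 ≤ 1 + ‖p‖ := by linarith [norm_nonneg p]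
    have hp0 : 0 < 1 + ‖p‖ := by linarith
    have hw := xWeight_nonneg a b s p
    rw [Real.norm_of_nonneg (by positivity), Real.rpow_neg hp0.le, ← div_eq_mul_inv,
      le_div_iff₀ (by positivity)]
    have e3 : (1 + ‖p‖) ^ (3 : ℝ) = (1 + ‖p‖) ^ 3 := by exact_mod_cast Real.rpow_natCast _ 3
    rw [e3]
    calc xWeight a b s p * ‖Φ p‖ ^ 2 * (1 + ‖p‖) ^ 3
        ≤ (2 * (1 + ‖p‖) ^ n) * ‖Φ p‖ ^ 2 * (1 + ‖p‖) ^ 3 := by gcongr; exact hn p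
      _ = 2 * ((1 + ‖p‖) ^ (n + 3) * ‖Φ p‖ ^ 2) := by ring
      _ ≤ 2 * ((1 + ‖p‖) ^ ((n + 3) * 2) * ‖Φ p‖ ^ 2) := by
          gcongr
          omega
      _ = 2 * ((1 + ‖p‖) ^ (n + 3) * ‖Φ p‖) ^ 2 := by rw [mul_pow, pow_mul]
      _ ≤ 2 * D ^ 2 := by gcongr; exact hD p

/-! ### The cutoff as an average in the time frequency -/

lemma FT2_cutoff_eq (Ψ : SchwartzMap ℝ ℂ) (f : SchwartzMap (ℝ × ℝ) ℂ) (δ ξ lam : ℝ) :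
    FT2 (fun p => Ψ (p.2 / δ) * f p) ξ lam =
      ∫ v, (𝓕 Ψ) v * FT2 (fun p => f p) ξ (lam + 2 * Real.pi / δ * v) := by
  have hinv : ∀ t : ℝ, Ψ t = ∫ v : ℝ, cexp (((2 * Real.pi * (v * t) : ℝ) : ℂ) * I) * (𝓕 Ψ) v := by
    intro t
    have h := congrArg (fun g : SchwartzMap ℝ ℂ => g t) 
      (FourierTransform.fourierInv_fourier_eq Ψ : 𝓕⁻ (𝓕 Ψ) = Ψ)
    simp only [SchwartzMap.fourierInv_coe] at h
    rw [← h, Real.fourierInv_eq']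
    simp [mul_comm]
  have hexp : ∀ (p : ℝ × ℝ) (v : ℝ),
      cexp (I * ((p.1 * ξ + p.2 * (lam + 2 * Real.pi / δ * v) : ℝ) : ℂ)) =
      cexp (I * ((p.1 * ξ + p.2 * lam : ℝ) : ℂ)) *
        cexp (((2 * Real.pi * (v * (p.2 / δ)) : ℝ) : ℂ) * I) := by
    intro p v
    rw [← Complex.exp_add]
    congr 1
    push_cast
    ring
  unfold FT2
  calc _ = ∫ p : ℝ × ℝ, ∫ v : ℝ, (𝓕 Ψ) v *
        (cexp (I * ((p.1 * ξ + p.2 * (lam + 2 * Real.pi / δ * v) : ℝ) : ℂ)) * f p) := by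
        refine integral_congr_ae (Filter.Eventually.of_forall fun p => ?_)
        simp only [hexp]
        rw [hinv (p.2 / δ), ← integral_mul_const, ← integral_const_mul]
        refine integral_congr_ae (Filter.Eventually.of_forall fun v => ?_)
        simp only
        ring
    _ = ∫ v : ℝ, ∫ p : ℝ × ℝ, (𝓕 Ψ) v *
        (cexp (I * ((p.1 * ξ + p.2 * (lam + 2 * Real.pi / δ * v) : ℝ) : ℂ)) * f p) := by
        refine integral_integral_swap ?_
        have hi : Integrable (fun z : (ℝ × ℝ) × ℝ => f z.1 * (𝓕 Ψ) z.2) (volume.prod volume) :=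
          Integrable.mul_prod (SchwartzMap.integrable f) (SchwartzMap.integrable _)
        refine hi.mono ?_ (Filter.Eventually.of_forall fun z => ?_)
        · have h1 := f.continuous
          have h2 := (𝓕 Ψ).continuous
          refine Continuous.aestronglyMeasurable ?_
          simp only [Function.uncurry_def]
          fun_prop
        · simp only [Function.uncurry_def, norm_mul]
          rw [mul_comm I, Complex.norm_exp_ofReal_mul_I]
          apply le_of_eq
          ring
    _ = _ := by
        simp only [integral_const_mul]

/-- If `G` is dominated by the average of the translates `g(ξ, λ + r v)` against `h`, and the weight
satisfies the averaging bound `hM`, then the weighted `L²` norm of `G` is controlled by that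
of `g`. -/
lemma lintegral_xWeight_le (a : ℝ) {b : ℝ} (s : ℝ) {h : ℝ → ℝ}
    (hhm : Measurable h)
    {M : ℝ} {r : ℝ}
    (hM : ∀ z : ℝ, ENNReal.ofReal ((1 + |z|) ^ (2 * b)) *
        ∫⁻ v, ENNReal.ofReal (h v) * ENNReal.ofReal ((1 + |z + r * v|) ^ (-(2 * b))) ≤
        ENNReal.ofReal M)
    {G g : ℝ × ℝ → ENNReal} (hg : Measurable g)
    (hG : ∀ p, G p ≤ ∫⁻ v, ENNReal.ofReal (h v) * g (p.1, p.2 + r * v)) :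
    ∫⁻ p, ENNReal.ofReal (xWeight a b s p) * G p ^ 2 ≤
      ENNReal.ofReal M * (∫⁻ v, ENNReal.ofReal (h v)) *
        ∫⁻ p, ENNReal.ofReal (xWeight a b s p) * g p ^ 2 := by
  have hdm := measurable_disp a
  have hwm := measurable_xWeight a b s
  set E : ℝ × ℝ → ENNReal := fun p => ENNReal.ofReal (xWeight a b s p) * g p ^ 2 with hE
  have hEm : Measurable E := by fun_prop
  have hpt : ∀ p, ENNReal.ofReal (xWeight a b s p) * G p ^ 2 ≤
      ENNReal.ofReal M * ∫⁻ v, ENNReal.ofReal (h v) * E (p.1, p.2 + r * v) := by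
    intro p
    set z := p.2 - disp a p.1 with hz
    have hzv : ∀ v, p.2 + r * v - disp a p.1 = z + r * v := fun v => by rw [hz]; ring
    have hcs := lintegral_mul_sq_le volume (h := fun v => ENNReal.ofReal (h v))
      (g := fun v => g (p.1, p.2 + r * v))
      (u := fun v => ENNReal.ofReal ((1 + |z + r * v|) ^ (-(2 * b))))
      (v := fun v => ENNReal.ofReal ((1 + |z + r * v|) ^ (2 * b)))
      (by fun_prop) (by fun_prop) (by fun_prop) (by fun_prop) (fun v => by
        rw [← ENNReal.ofReal_mul (by positivity), ← Real.rpow_add (by positivity)]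
        simp)
    have hEe : ∀ v, ENNReal.ofReal (h v) * E (p.1, p.2 + r * v) =
        ENNReal.ofReal ((1 + |p.1|) ^ (2 * s)) * (ENNReal.ofReal (h v) *
          (ENNReal.ofReal ((1 + |z + r * v|) ^ (2 * b)) * g (p.1, p.2 + r * v) ^ 2)) := by
      intro v
      simp only [hE, xWeight, hzv]
      rw [ENNReal.ofReal_mul (by positivity)]
      ring
    simp only [hEe]
    rw [lintegral_const_mul' _ _ ENNReal.ofReal_ne_top]
    have hx : ENNReal.ofReal (xWeight a b s p) = ENNReal.ofReal ((1 + |z|) ^ (2 * b)) *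
        ENNReal.ofReal ((1 + |p.1|) ^ (2 * s)) := by
      rw [← ENNReal.ofReal_mul (by positivity)]; rfl
    rw [hx]
    set I₁ := ∫⁻ v, ENNReal.ofReal (h v) * ENNReal.ofReal ((1 + |z + r * v|) ^ (-(2 * b)))
    set I₂ := ∫⁻ v, ENNReal.ofReal (h v) *
          (ENNReal.ofReal ((1 + |z + r * v|) ^ (2 * b)) * g (p.1, p.2 + r * v) ^ 2)
    set A := ENNReal.ofReal ((1 + |z|) ^ (2 * b))
    set B := ENNReal.ofReal ((1 + |p.1|) ^ (2 * s))
    calc A * B * G p ^ 2 ≤ A * B * (I₁ * I₂) := by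
          gcongr
          exact (pow_le_pow_left' (hG p) 2).trans hcs
      _ = (A * I₁) * (B * I₂) := by ring
      _ ≤ _ := by gcongr; exact hM z
  calc _ ≤ ∫⁻ p : ℝ × ℝ, ENNReal.ofReal M * ∫⁻ v, ENNReal.ofReal (h v) * E (p.1, p.2 + r * v) :=
        lintegral_mono hpt
    _ = ENNReal.ofReal M * ∫⁻ p : ℝ × ℝ, ∫⁻ v, ENNReal.ofReal (h v) * E (p.1, p.2 + r * v) :=
        lintegral_const_mul' _ _ ENNReal.ofReal_ne_top
    _ = ENNReal.ofReal M * ∫⁻ v, ∫⁻ p : ℝ × ℝ, ENNReal.ofReal (h v) * E (p.1, p.2 + r * v) := by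
        rw [lintegral_lintegral_swap]
        simp only [Function.uncurry_def]
        exact (by fun_prop : Measurable _).aemeasurable
    _ = ENNReal.ofReal M * ∫⁻ v, ENNReal.ofReal (h v) * ∫⁻ p, E p := by
        congr 1
        refine lintegral_congr fun v => ?_
        rw [lintegral_const_mul' _ _ ENNReal.ofReal_ne_top]
        congr 1
        have := lintegral_add_right_eq_self (μ := (volume : Measure (ℝ × ℝ))) E (0, r * v)
        rw [← this]
        refine lintegral_congr fun p => ?_
        simp [Prod.add_def]
    _ = _ := by
        rw [lintegral_mul_const _ (by fun_prop), mul_assoc]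

/-! ### The cutoff estimate -/

theorem statement16 (a : ℝ) (ha : a ∈ Set.Ioo (0 : ℝ) 1) (s : ℝ)
    (b : ℝ) (hb : b ∈ Set.Ioo (0 : ℝ) (1 / 2))
    (ψ : ℝ → ℝ) (hψ : TimeCutoff ψ) :
    ∃ C > 0, ∀ δ ∈ Set.Ioo (0 : ℝ) 1, ∀ f : SchwartzMap (ℝ × ℝ) ℂ,
      XtildeNorm a b s (fun p : ℝ × ℝ => (ψ (p.2 / δ) : ℂ) * f p) ≤
        C * XtildeNorm a b s (fun p => f p) := by
  have hcs : HasCompactSupport (fun t => (ψ t : ℂ)) := by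
    refine HasCompactSupport.of_support_subset_isCompact (isCompact_Icc (a := (-1 : ℝ)) (b := 1)) ?_
    intro t ht
    exact abs_le.1 (hψ.supp t fun h => ht (by simp [h]))
  have hsm : ContDiff ℝ (⊤ : ℕ∞) (fun t => (ψ t : ℂ)) :=
    Complex.ofRealCLM.contDiff.comp hψ.smooth
  set Ψ : SchwartzMap ℝ ℂ := hcs.toSchwartzMap hsm with hΨ
  have hΨv : ∀ t, Ψ t = (ψ t : ℂ) := fun t => rfl
  set h : ℝ → ℝ := fun v => ‖(𝓕 Ψ) v‖ with hh
  have hhi : Integrable h := (SchwartzMap.integrable (𝓕 Ψ)).norm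
  have hhm : Measurable h := (𝓕 Ψ).continuous.norm.measurable
  obtain ⟨C₀, hC₀, hdec⟩ := schwartz_decay (𝓕 Ψ) 4
  have hhdec : ∀ v, h v ≤ C₀ * ((1 + v ^ 2)⁻¹) ^ 2 := by
    intro v
    rw [inv_pow, ← div_eq_mul_inv, le_div_iff₀ (by positivity)]
    refine le_trans ?_ (hdec v)
    rw [mul_comm]
    have : 1 + v ^ 2 ≤ (1 + ‖v‖) ^ 2 := by
      rw [Real.norm_eq_abs, ← sq_abs v]
      nlinarith [abs_nonneg v]
    calc (1 + v ^ 2) ^ 2 * h v ≤ ((1 + ‖v‖) ^ 2) ^ 2 * h v := by gcongr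
      _ = _ := by rw [← pow_mul]
  obtain ⟨M, hM⟩ := exists_average_bound (β := 2 * b) (by linarith [hb.1]) (by linarith [hb.2])
    hC₀ (fun v => norm_nonneg _) hhdec
  set L : ENNReal := ENNReal.ofReal M * ∫⁻ v, ENNReal.ofReal (h v) with hL
  have hLtop : L ≠ ⊤ := by
    refine ENNReal.mul_ne_top ENNReal.ofReal_ne_top ?_
    rw [← ofReal_integral_eq_lintegral_ofReal hhi
      (Filter.Eventually.of_forall fun v => norm_nonneg _)]
    exact ENNReal.ofReal_ne_top
  -- The summand `1` only serves to make the constant positive.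
  refine ⟨(L.toReal + 1) ^ ((1 : ℝ) / 2), by positivity, fun δ hδ f => ?_⟩
  obtain ⟨Φ, hΦ⟩ := exists_schwartz_FT2 f
  have hr : 0 < 2 * Real.pi / δ := div_pos (by positivity) hδ.1
  set G : ℝ × ℝ → ℂ := fun p =>
    FT2 (fun p : ℝ × ℝ => (ψ (p.2 / δ) : ℂ) * f p) p.1 p.2 with hG
  have hGb : ∀ p : ℝ × ℝ, ‖G p‖ₑ ≤ ∫⁻ v, ENNReal.ofReal (h v) *
      ‖Φ (p.1, p.2 + 2 * Real.pi / δ * v)‖ₑ := by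
    intro p
    have := FT2_cutoff_eq Ψ f δ p.1 p.2
    simp only [hΨv] at this
    simp only [hG, this]
    refine (enorm_integral_le_lintegral_enorm _).trans (le_of_eq ?_)
    refine lintegral_congr fun v => ?_
    rw [enorm_mul, hΦ, hh, ofReal_norm]
  have hmain := lintegral_xWeight_le a s hhm (hM _ hr) (G := fun p => ‖G p‖ₑ)
    (g := fun p => ‖Φ p‖ₑ) Φ.continuous.measurable.enorm hGb
  have hconv : ∀ (u : ℝ × ℝ → ℂ) (p : ℝ × ℝ), ENNReal.ofReal (xWeight a b s p) * ‖u p‖ₑ ^ 2 =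
      ENNReal.ofReal (xWeight a b s p * ‖u p‖ ^ 2) := by
    intro u p
    rw [ENNReal.ofReal_mul (xWeight_nonneg _ _ _ _), ENNReal.ofReal_pow (norm_nonneg _),
      ofReal_norm]
  simp only [hconv] at hmain
  have hΦi := integrable_xWeight_mul ha hb s Φ
  have hnn : ∀ (u : ℝ × ℝ → ℂ) (p : ℝ × ℝ), 0 ≤ xWeight a b s p * ‖u p‖ ^ 2 := fun u p =>
    mul_nonneg (xWeight_nonneg _ _ _ _) (by positivity)
  have hI0 : 0 ≤ ∫ p, xWeight a b s p * ‖Φ p‖ ^ 2 := integral_nonneg (hnn Φ)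
  rw [← ofReal_integral_eq_lintegral_ofReal hΦi (Filter.Eventually.of_forall (hnn Φ))] at hmain
  have hint : ∫ p, xWeight a b s p * ‖G p‖ ^ 2 ≤
      (L.toReal + 1) * ∫ p, xWeight a b s p * ‖Φ p‖ ^ 2 := by
    by_cases hGi : Integrable fun p => xWeight a b s p * ‖G p‖ ^ 2
    · rw [← ofReal_integral_eq_lintegral_ofReal hGi (Filter.Eventually.of_forall (hnn G)),
        ← hL, ← ENNReal.ofReal_toReal hLtop, ← ENNReal.ofReal_mul ENNReal.toReal_nonneg] at hmain
      have := (ENNReal.ofReal_le_ofReal_iff (by positivity)).1 hmain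
      linarith
    · rw [integral_undef hGi]
      positivity
  have e1 : XtildeNorm a b s (fun p : ℝ × ℝ => (ψ (p.2 / δ) : ℂ) * f p) =
      (∫ p, xWeight a b s p * ‖G p‖ ^ 2) ^ ((1 : ℝ) / 2) := rfl
  have e2 : XtildeNorm a b s (fun p => f p) =
      (∫ p, xWeight a b s p * ‖Φ p‖ ^ 2) ^ ((1 : ℝ) / 2) := by
    simp only [hΦ]
    rfl
  rw [e1, e2, ← Real.mul_rpow (by positivity) hI0]
  exact Real.rpow_le_rpow (integral_nonneg (hnn G)) hint (by norm_num)
end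
end
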